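/- Let Φ⁺ be the positive roots of E8 and let λ̄ be a coweight with λ̄(β) = 0 for a positive root β, and suppose λ̄(α) ≥ 0 for all simple roots α (λ̄ dominant). Then for any m > 1, Σ_{α∈Φ⁺} λ̄(α)^{m−1}·β^∨(α) = 0; more generally, if θ is any ℤ-linear combination of simple coroots α_i^∨ with λ̄(α_i) = 0 for each such i, then Σ_{α∈Φ⁺} λ̄(α)^{m−1}·θ(α) = 0. -/

import Mathlib

/-!
By linearity in `c` it suffices to treat a simple coroot `αᵢ^∨` with `λ̄(αᵢ) = 0`. The simple
reflection `sᵢ` permutes the positive roots other than `αᵢ` (`simpleReflection_mem`). It preserves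
`λ̄(α)`, because `λ̄(αᵢ) = 0`, and negates `αᵢ^∨(α)`, so the terms cancel along its orbits; the
remaining term, at `αᵢ` itself, vanishes because `λ̄(αᵢ) = 0` and the exponent is positive.

Positive roots are given here as integer vectors of squared length `2` with coordinates in
`[0, 6]`, so the permutation property needs two facts about the form. Coordinates stay nonnegative
because a vector of squared length `2` whose only negative coordinate is the `i`-th must be `-αᵢ`
(`eq_neg_single`, from positive definiteness). The bound by `6` holds for every integer vector of
squared length `2` (`coord_le_six`). Both rest on writing the form as a sum of squares.
-/

/-- The Cartan matrix of E8, nodes ordered by Coxeter labels `2,3,4,5,6,4',2',3'`. -/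
def E8Cartan : Matrix (Fin 8) (Fin 8) ℤ :=
  !![ 2, -1,  0,  0,  0,  0,  0,  0;
     -1,  2, -1,  0,  0,  0,  0,  0;
      0, -1,  2, -1,  0,  0,  0,  0;
      0,  0, -1,  2, -1,  0,  0,  0;
      0,  0,  0, -1,  2, -1,  0, -1;
      0,  0,  0,  0, -1,  2, -1,  0;
      0,  0,  0,  0,  0, -1,  2,  0;
      0,  0,  0,  0, -1,  0,  0,  2]

/-- The symmetric bilinear form on the (co)root lattice of E8 given by the Cartan matrix,
in simple-root coordinates.  For roots `β, α` one has `β^∨(α) = cartanForm β α`. -/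
def cartanForm (x y : Fin 8 → ℤ) : ℤ := ∑ i, ∑ j, x i * E8Cartan i j * y j

/-- The positive roots of E8, as vectors of (nonnegative) coordinates in the basis of
simple roots: exactly the nonnegative integer vectors of squared length 2 (all
coordinates of a positive root of E8 are at most 6). -/
def E8PosRoots : Finset (Fin 8 → ℤ) :=
  ((Fintype.piFinset fun _ : Fin 8 => Finset.range 7).image fun v i => ((v i : ℤ))).filter
    fun v => cartanForm v v = 2

/-- Evaluation of a coweight (given by its values `lam i = λ̄(αᵢ)` on simple roots) on a
root `α` written in simple-root coordinates. -/
def evalCw (lam : Fin 8 → ℤ) (α : Fin 8 → ℤ) : ℤ := ∑ i, α i * lam i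

theorem cartanForm_explicit (x y : Fin 8 → ℤ) : cartanForm x y =
    2 * (x 0 * y 0 + x 1 * y 1 + x 2 * y 2 + x 3 * y 3 + x 4 * y 4 + x 5 * y 5 + x 6 * y 6
      + x 7 * y 7)
    - (x 0 * y 1 + x 1 * y 0) - (x 1 * y 2 + x 2 * y 1) - (x 2 * y 3 + x 3 * y 2)
    - (x 3 * y 4 + x 4 * y 3) - (x 4 * y 5 + x 5 * y 4) - (x 5 * y 6 + x 6 * y 5)
    - (x 4 * y 7 + x 7 * y 4) := by
  simp [cartanForm, Fin.sum_univ_eight, E8Cartan]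
  ring

theorem cartanForm_sub_smul_right (x y z : Fin 8 → ℤ) (t : ℤ) :
    cartanForm x (y - t • z) = cartanForm x y - t * cartanForm x z := by
  simp only [cartanForm_explicit, Pi.sub_apply, Pi.smul_apply, smul_eq_mul]; ring

theorem cartanForm_self_sub_smul (y z : Fin 8 → ℤ) (t : ℤ) :
    cartanForm (y - t • z) (y - t • z) =
      cartanForm y y - 2 * t * cartanForm z y + t ^ 2 * cartanForm z z := by
  simp only [cartanForm_explicit, Pi.sub_apply, Pi.smul_apply, smul_eq_mul]; ring

theorem cartanForm_single_single (i : Fin 8) :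
    cartanForm (Pi.single i 1) (Pi.single i 1) = 2 := by
  revert i; decide

theorem cartanForm_eq_sum_single (c x : Fin 8 → ℤ) :
    cartanForm c x = ∑ i, c i * cartanForm (Pi.single i 1) x := by
  simp [cartanForm, Pi.single_apply, Finset.mul_sum, mul_assoc]

/-- Completing squares along the three arms of the E8 diagram, towards the branch node `4`. -/
theorem sixty_mul_cartanForm_self (x : Fin 8 → ℤ) : 60 * cartanForm x x =
    30 * (2 * x 0 - x 1) ^ 2 + 10 * (3 * x 1 - 2 * x 2) ^ 2 + 5 * (4 * x 2 - 3 * x 3) ^ 2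
      + 3 * (5 * x 3 - 4 * x 4) ^ 2 + 30 * (2 * x 6 - x 5) ^ 2 + 10 * (3 * x 5 - 2 * x 4) ^ 2
      + 30 * (2 * x 7 - x 4) ^ 2 + 2 * x 4 ^ 2 := by
  rw [cartanForm_explicit]; ring

theorem cartanForm_self_nonneg (x : Fin 8 → ℤ) : 0 ≤ cartanForm x x := by
  have h := sixty_mul_cartanForm_self x
  have : 0 ≤ 60 * cartanForm x x := by rw [h]; positivity
  linarith

/-- The inverse of the Cartan matrix, which is integral since the E8 lattice is unimodular.
Its rows are the fundamental weights in simple-root coordinates. -/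
def fundWeight : Matrix (Fin 8) (Fin 8) ℤ :=
  !![2, 3, 4, 5, 6, 4, 2, 3;
     3, 6, 8, 10, 12, 8, 4, 6;
     4, 8, 12, 15, 18, 12, 6, 9;
     5, 10, 15, 20, 24, 16, 8, 12;
     6, 12, 18, 24, 30, 20, 10, 15;
     4, 8, 12, 16, 20, 14, 7, 10;
     2, 4, 6, 8, 10, 7, 4, 5;
     3, 6, 9, 12, 15, 10, 5, 8]

theorem cartanForm_fundWeight (i : Fin 8) (x : Fin 8 → ℤ) :
    cartanForm (fundWeight i) x = x i := by
  rw [cartanForm_explicit]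
  fin_cases i <;> simp [fundWeight] <;> ring

/-- Cauchy–Schwarz against the `i`-th fundamental weight. -/
theorem sq_coord_le (i : Fin 8) (x : Fin 8 → ℤ) :
    x i ^ 2 ≤ fundWeight i i * cartanForm x x := by
  have hd : 0 < fundWeight i i := by revert i; decide
  have h2 : 0 ≤ cartanForm (fundWeight i i • x - x i • fundWeight i)
      (fundWeight i i • x - x i • fundWeight i) := cartanForm_self_nonneg _
  have h3 : cartanForm (fundWeight i i • x) (fundWeight i i • x)
      = fundWeight i i ^ 2 * cartanForm x x := by
    simp only [cartanForm_explicit, Pi.smul_apply, smul_eq_mul]; ring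
  rw [cartanForm_self_sub_smul, h3, cartanForm_fundWeight, cartanForm_fundWeight] at h2
  simp only [Pi.smul_apply, smul_eq_mul] at h2
  nlinarith

theorem eq_zero_of_cartanForm_self {x : Fin 8 → ℤ} (h : cartanForm x x ≤ 0) : x = 0 := by
  funext i
  have h1 := sq_coord_le i x
  have h0 : cartanForm x x = 0 := le_antisymm h (cartanForm_self_nonneg x)
  rw [h0, mul_zero] at h1
  exact pow_eq_zero_iff two_ne_zero |>.1 (le_antisymm h1 (sq_nonneg _))

theorem coord_le_six {x : Fin 8 → ℤ} (h : cartanForm x x = 2) (i : Fin 8) : x i ≤ 6 := by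
  by_cases hi : i = 4
  · -- Cauchy–Schwarz alone only gives `x 4 ≤ 7`; if `x 4 = 7` then `2 * x 7 - x 4` is odd,
    -- and its square pushes the form above `2`.
    subst hi
    have hs := sixty_mul_cartanForm_self x
    rw [h] at hs
    have hs' : 30 * (2 * x 7 - x 4) ^ 2 + 2 * x 4 ^ 2 ≤ 120 := by
      have : 0 ≤ 30 * (2 * x 0 - x 1) ^ 2 + 10 * (3 * x 1 - 2 * x 2) ^ 2
        + 5 * (4 * x 2 - 3 * x 3) ^ 2 + 3 * (5 * x 3 - 4 * x 4) ^ 2 + 30 * (2 * x 6 - x 5) ^ 2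
        + 10 * (3 * x 5 - 2 * x 4) ^ 2 := by positivity
      linarith
    by_contra! h7
    have h8 : x 4 < 8 := by nlinarith [sq_nonneg (2 * x 7 - x 4)]
    have h7' : x 4 = 7 := by omega
    rw [h7'] at hs'
    have : 1 ≤ (2 * x 7 - 7) ^ 2 := by
      have : 2 * x 7 - 7 ≠ 0 := by omega
      have := sq_pos_of_ne_zero this
      omega
    linarith
  · have h1 := sq_coord_le i x
    have hd : fundWeight i i ≤ 20 :=
      (by decide : ∀ i : Fin 8, ¬i = 4 → fundWeight i i ≤ 20) i hi
    rw [h] at h1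
    nlinarith

theorem mem_E8PosRoots {x : Fin 8 → ℤ} :
    x ∈ E8PosRoots ↔ (∀ i, 0 ≤ x i) ∧ cartanForm x x = 2 := by
  simp only [E8PosRoots, Finset.mem_filter, Finset.mem_image, Fintype.mem_piFinset,
    Finset.mem_range]
  constructor
  · rintro ⟨⟨v, -, rfl⟩, h⟩
    exact ⟨fun i => Int.natCast_nonneg _, h⟩
  · rintro ⟨h0, h⟩
    refine ⟨⟨fun i => (x i).toNat, fun i => ?_, ?_⟩, h⟩
    · exact Nat.lt_succ_of_le (Int.toNat_le.2 (coord_le_six h i))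
    · funext i
      exact Int.toNat_of_nonneg (h0 i)

/-- The off-diagonal entries of the Cartan matrix are nonpositive. -/
theorem cartanForm_single_nonpos {i : Fin 8} {p : Fin 8 → ℤ} (hp : ∀ j, 0 ≤ p j)
    (hi : p i = 0) : cartanForm (Pi.single i 1) p ≤ 0 := by
  have h : cartanForm (Pi.single i 1) p = ∑ j, E8Cartan i j * p j := by
    simp [cartanForm, Pi.single_apply]
  rw [h]
  refine Finset.sum_nonpos fun j _ => ?_
  by_cases hj : j = i
  · simp [hj, hi]
  · have : E8Cartan i j ≤ 0 := by
      clear h hi hp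
      revert hj
      fin_cases i <;> fin_cases j <;> simp [E8Cartan]
    exact mul_nonpos_of_nonpos_of_nonneg this (hp j)

/-- Writing `y = p - n αᵢ` with `p ≥ 0`, `pᵢ = 0` and `n > 0`, the squared length of `y` is at
least that of `p` plus `2 n²`, which forces `p = 0` and `n = 1`. -/
theorem eq_neg_single {i : Fin 8} {y : Fin 8 → ℤ} (hy : cartanForm y y = 2)
    (h0 : ∀ j, j ≠ i → 0 ≤ y j) (hi : y i < 0) : y = -Pi.single i 1 := by
  set p : Fin 8 → ℤ := y - y i • Pi.single i 1 with hp
  have hpi : p i = 0 := by simp [hp]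
  have hp0 : ∀ j, 0 ≤ p j := by
    intro j
    by_cases hj : j = i
    · rw [hj, hpi]
    · simpa [hp, hj] using h0 j hj
  have hyp : y = p - (-y i) • Pi.single i 1 := by simp [hp]
  have hc := cartanForm_single_nonpos hp0 hpi
  have hq := cartanForm_self_sub_smul p (Pi.single i 1) (-y i)
  rw [← hyp, hy, cartanForm_single_single] at hq
  have hn := cartanForm_self_nonneg p
  have hmix : 0 ≤ y i * cartanForm (Pi.single i 1) p :=
    mul_nonneg_of_nonpos_of_nonpos hi.le hc
  have hyi : y i = -1 := by nlinarith
  have hpz : p = 0 := eq_zero_of_cartanForm_self (by rw [hyi] at hq hmix; linarith)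
  rw [hyp, hpz, hyi]
  simp

/-- The simple reflection `sᵢ(α) = α - αᵢ^∨(α) αᵢ`. -/
def simpleReflection (i : Fin 8) (x : Fin 8 → ℤ) : Fin 8 → ℤ :=
  x - cartanForm (Pi.single i 1) x • Pi.single i 1

theorem cartanForm_single_simpleReflection (i : Fin 8) (x : Fin 8 → ℤ) :
    cartanForm (Pi.single i 1) (simpleReflection i x) = -cartanForm (Pi.single i 1) x := by
  rw [simpleReflection, cartanForm_sub_smul_right, cartanForm_single_single]; ring

theorem simpleReflection_simpleReflection (i : Fin 8) (x : Fin 8 → ℤ) :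
    simpleReflection i (simpleReflection i x) = x := by
  rw [simpleReflection, cartanForm_single_simpleReflection, simpleReflection]
  simp

theorem simpleReflection_neg_single (i : Fin 8) :
    simpleReflection i (-Pi.single i 1) = Pi.single i 1 := by
  revert i; decide

theorem simpleReflection_single (i : Fin 8) :
    simpleReflection i (Pi.single i 1) = -Pi.single i 1 := by
  revert i; decide

theorem evalCw_simpleReflection {lam : Fin 8 → ℤ} {i : Fin 8} (hi : lam i = 0)
    (x : Fin 8 → ℤ) : evalCw lam (simpleReflection i x) = evalCw lam x := by
  simp [evalCw, simpleReflection, sub_mul, Finset.sum_sub_distrib, Pi.single_apply, hi]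

theorem simpleReflection_mem {i : Fin 8} {x : Fin 8 → ℤ}
    (hx : x ∈ E8PosRoots.erase (Pi.single i 1)) :
    simpleReflection i x ∈ E8PosRoots.erase (Pi.single i 1) := by
  obtain ⟨hne, hx⟩ := Finset.mem_erase.1 hx
  obtain ⟨h0, h2⟩ := mem_E8PosRoots.1 hx
  have hq : cartanForm (simpleReflection i x) (simpleReflection i x) = 2 := by
    rw [simpleReflection, cartanForm_self_sub_smul, cartanForm_single_single, h2]; ring
  have hj : ∀ j, j ≠ i → 0 ≤ simpleReflection i x j := by
    intro j hj
    simpa [simpleReflection, hj] using h0 j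
  refine Finset.mem_erase.2 ⟨fun h => ?_, mem_E8PosRoots.2 ⟨fun j => ?_, hq⟩⟩
  · -- `sᵢ x = αᵢ` would give `x = -αᵢ`, which is not positive.
    have hxi : x = -Pi.single i 1 := by
      rw [← simpleReflection_simpleReflection i x, h, simpleReflection_single]
    have := h0 i
    simp [hxi] at this
  · by_cases hji : j = i
    · subst hji
      by_contra! hneg
      apply hne
      rw [← simpleReflection_simpleReflection j x, eq_neg_single hq hj hneg,
        simpleReflection_neg_single]
    · exact hj j hji

/-- The vanishing for a single simple coroot `αᵢ^∨` with `λ̄(αᵢ) = 0`. -/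
theorem sum_single_eq_zero {lam : Fin 8 → ℤ} {i : Fin 8} (hi : lam i = 0) {k : ℕ} (hk : k ≠ 0) :
    ∑ α ∈ E8PosRoots, evalCw lam α ^ k * cartanForm (Pi.single i 1) α = 0 := by
  have he : evalCw lam (Pi.single i 1) = 0 := by
    simp [evalCw, Pi.single_apply, hi]
  rw [← Finset.sum_erase (a := Pi.single i 1) E8PosRoots (by rw [he, zero_pow hk, zero_mul])]
  refine Finset.sum_involution (fun α _ => simpleReflection i α) (fun α _ => ?_)
    (fun α _ hα hfix => ?_) (fun α hα => simpleReflection_mem hα)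
    (fun α _ => simpleReflection_simpleReflection i α)
  · rw [evalCw_simpleReflection hi, cartanForm_single_simpleReflection]; ring
  · have h := cartanForm_single_simpleReflection i α
    rw [hfix] at h
    exact hα (by rw [show cartanForm (Pi.single i 1) α = 0 by omega, mul_zero])

/-- For a dominant coweight `λ̄` of E8 (`λ̄(αᵢ) ≥ 0` for all simple roots) and any
`θ = Σ cᵢ αᵢ^∨` supported on simple coroots with `λ̄(αᵢ) = 0` (i.e. `⟨λ̄,θ⟩ = 0`), one
has `F_m^{(1)}(λ̄,θ) = Σ_{α>0} λ̄(α)^{m−1} θ(α) = 0` for every `m > 1`.  In particular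
this applies to `θ = β^∨` for any positive root `β` with `λ̄(β) = 0`. -/
theorem Fm1_vanishes (lam c : Fin 8 → ℤ) (hdom : ∀ i, 0 ≤ lam i)
    (hsupp : ∀ i, c i ≠ 0 → lam i = 0) (m : ℕ) (hm : 1 < m) :
    ∑ α ∈ E8PosRoots, evalCw lam α ^ (m - 1) * cartanForm c α = 0 := by
  simp_rw [cartanForm_eq_sum_single c, Finset.mul_sum]
  rw [Finset.sum_comm]
  refine Finset.sum_eq_zero fun i _ => ?_
  simp_rw [mul_left_comm _ (c i)]
  rw [← Finset.mul_sum]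
  by_cases hc : c i = 0
  · rw [hc, zero_mul]
  · rw [sum_single_eq_zero (hsupp i hc) (by omega), mul_zero]
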